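/- Proposition 1: Let f^w be a K-layer feedforward network with C = n_K output classes and monotone nondecreasing activation h, let x ∈ ℝ^{n_0} be an input, y a class, and p_ε a probability measure on [0,∞). Then both ε ↦ σ_y(f_min^{w,ε}(x)) and ε ↦ σ_y(f_{LB}^{w,ε}(x)) are antitone, [0,1]-valued functions on [0,∞), and the robust likelihood is lower bounded by its IBP approximation: p(y|x,w) = ∫ σ_y(f_min^{w,ε}(x)) dp_ε(ε) ≥ ∫ σ_y(f_{LB}^{w,ε}(x)) dp_ε(ε) =: p_IBP(y|x,w). -/

import Mathlib

open MeasureTheory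

/-- Activations of a feedforward network: `netPhi … x 0 = x` (the input `φ_(0)`) and
`netPhi … x (k+1) = h (W_k (netPhi … x k) + b_k)` (the activation `φ_(k+1)`).
For a `K`-layer network only the values with `k ≤ K - 1` are used. -/
noncomputable def netPhi (n : ℕ → ℕ)
    (W : ∀ k : ℕ, Matrix (Fin (n (k + 1))) (Fin (n k)) ℝ)
    (b : ∀ k : ℕ, Fin (n (k + 1)) → ℝ) (h : ℝ → ℝ)
    (x : Fin (n 0) → ℝ) : (k : ℕ) → Fin (n k) → ℝ
  | 0 => x
  | (k + 1) => fun i => h (((W k).mulVec (netPhi n W b h x k) + b k) i)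

/-- Pre-activations: `netPre … x k = W_k φ_(k) + b_k`, i.e. the pre-activation
`f_(k+1)` of the network.  The output of a `K`-layer network is `f^w(x) = netPre … x (K-1)`. -/
noncomputable def netPre (n : ℕ → ℕ)
    (W : ∀ k : ℕ, Matrix (Fin (n (k + 1))) (Fin (n k)) ℝ)
    (b : ∀ k : ℕ, Fin (n (k + 1)) → ℝ) (h : ℝ → ℝ)
    (x : Fin (n 0) → ℝ) (k : ℕ) : Fin (n (k + 1)) → ℝ :=
  (W k).mulVec (netPhi n W b h x k) + b k

/-- Interval bound propagation on the activations: `ibpPhi … x ε k = (φ_(k)^L, φ_(k)^U)`.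
At `k = 0` the bounds are `x ∓ ε·𝟙`; at `k+1` they are `h (μ_{k+1} ∓ r_{k+1})` with
`μ_{k+1} = W_k (φ_(k)^U + φ_(k)^L)/2 + b_k` and `r_{k+1} = |W_k| (φ_(k)^U − φ_(k)^L)/2`. -/
noncomputable def ibpPhi (n : ℕ → ℕ)
    (W : ∀ k : ℕ, Matrix (Fin (n (k + 1))) (Fin (n k)) ℝ)
    (b : ∀ k : ℕ, Fin (n (k + 1)) → ℝ) (h : ℝ → ℝ)
    (x : Fin (n 0) → ℝ) (ε : ℝ) : (k : ℕ) → (Fin (n k) → ℝ) × (Fin (n k) → ℝ)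
  | 0 => (fun i => x i - ε, fun i => x i + ε)
  | (k + 1) =>
      let L := (ibpPhi n W b h x ε k).1
      let U := (ibpPhi n W b h x ε k).2
      let μ := (W k).mulVec (fun i => (U i + L i) / 2) + b k
      let r := (Matrix.of fun i j => |W k i j|).mulVec (fun i => (U i - L i) / 2)
      (fun i => h (μ i - r i), fun i => h (μ i + r i))

/-- Interval bound propagation on the pre-activations:
`ibpPre … x ε k = (f_(k+1)^L, f_(k+1)^U) = (μ_{k+1} − r_{k+1}, μ_{k+1} + r_{k+1})`.
The IBP output bounds of a `K`-layer network are `(f^{w,L,ε}, f^{w,U,ε}) = ibpPre … x ε (K-1)`. -/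
noncomputable def ibpPre (n : ℕ → ℕ)
    (W : ∀ k : ℕ, Matrix (Fin (n (k + 1))) (Fin (n k)) ℝ)
    (b : ∀ k : ℕ, Fin (n (k + 1)) → ℝ) (h : ℝ → ℝ)
    (x : Fin (n 0) → ℝ) (ε : ℝ) (k : ℕ) : (Fin (n (k + 1)) → ℝ) × (Fin (n (k + 1)) → ℝ) :=
  let L := (ibpPhi n W b h x ε k).1
  let U := (ibpPhi n W b h x ε k).2
  let μ := (W k).mulVec (fun i => (U i + L i) / 2) + b k
  let r := (Matrix.of fun i j => |W k i j|).mulVec (fun i => (U i - L i) / 2)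
  (fun i => μ i - r i, fun i => μ i + r i)

/-- Softmax probability of class `y` for logits `z ∈ ℝ^C`. -/
noncomputable def softmax {C : ℕ} (y : Fin C) (z : Fin C → ℝ) : ℝ :=
  Real.exp (z y) / ∑ j, Real.exp (z j)

/-- Worst-case softmax of class `y` on the `ℓ∞` ε-ball around `x`:
`σ_y(f_min^{w,ε}(x)) = inf { σ_y(f x') : ‖x − x'‖_∞ ≤ ε }`.
(The norm on `Fin d → ℝ` is the sup norm.) -/
noncomputable def minSoftmax {d C : ℕ} (f : (Fin d → ℝ) → Fin C → ℝ)
    (x : Fin d → ℝ) (y : Fin C) (ε : ℝ) : ℝ :=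
  sInf {p : ℝ | ∃ x' : Fin d → ℝ, ‖x - x'‖ ≤ ε ∧ p = softmax y (f x')}

/-- The corner vector `f_LB` with `(f_LB) y = L y` and `(f_LB) j = U j` for `j ≠ y`. -/
def cornerLB {C : ℕ} (y : Fin C) (L U : Fin C → ℝ) : Fin C → ℝ :=
  fun j => if j = y then L j else U j

/-!
An affine layer sends the box `[L, U]` to `[W⁺ L - W⁻ U + b, W⁺ U - W⁻ L + b]`, where `W⁺` and
`W⁻` are the entrywise positive and negative parts. These bounds are monotone for inclusion of boxes
and exact on one-point boxes, and a monotone activation keeps both properties. Hence a smaller input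
box has smaller IBP output bounds: shrinking the radius gives antitonicity in `ε`, and shrinking to
a point of the ball gives soundness. The softmax at the corner `f_LB` decreases as the box of logits
grows, and it is the softmax itself on a one-point box, so it bounds the infimum from below.
-/

/-- Inclusion of the interval `I = (L, U)` in the interval `J`, the order in which interval bounds
propagate. It compares endpoints rather than sets, so it does not hold for free when `I` is empty
(`L ≤ U` fails), as for a box of negative radius. -/
def IsEnclosedBy {α : Type*} [LE α] (I J : α × α) : Prop :=
  J.1 ≤ I.1 ∧ I.2 ≤ J.2

theorem IsEnclosedBy.map {α β : Type*} [Preorder α] [Preorder β] {f : α → β} (hf : Monotone f)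
    {I J : α × α} (hIJ : IsEnclosedBy I J) : IsEnclosedBy (Prod.map f f I) (Prod.map f f J) :=
  ⟨hf hIJ.1, hf hIJ.2⟩

section AffineBounds

variable {m d R : Type*} [Fintype d]

theorem mulVec_le_mulVec_of_nonneg_left [Semiring R] [PartialOrder R] [IsOrderedRing R]
    {A : Matrix m d R} (hA : ∀ i j, 0 ≤ A i j) {u v : d → R} (huv : u ≤ v) :
    A.mulVec u ≤ A.mulVec v :=
  fun i => dotProduct_le_dotProduct_of_nonneg_left huv (hA i)

variable [Field R] [LinearOrder R]

/-- One affine step of interval bound propagation on the box `I = (L, U)`: the endpoints `μ ∓ r` of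
the image box, with centre `μ = W (U + L) / 2 + b` and radius `r = |W| (U - L) / 2`. -/
def affineBounds (W : Matrix m d R) (b : m → R) (I : (d → R) × (d → R)) : (m → R) × (m → R) :=
  let μ := W.mulVec (fun j => (I.2 j + I.1 j) / 2) + b
  let r := (Matrix.of fun i j => |W i j|).mulVec (fun j => (I.2 j - I.1 j) / 2)
  (fun i => μ i - r i, fun i => μ i + r i)

variable [IsStrictOrderedRing R]

theorem affineBounds_diag (W : Matrix m d R) (b : m → R) (v : d → R) :
    affineBounds W b (v, v) = (W.mulVec v + b, W.mulVec v + b) := by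
  have center_eq : (fun j => (v j + v j) / 2) = v := funext fun j => add_self_div_two (v j)
  have radius_eq : (fun j => (v j - v j) / 2) = 0 := by ext j; simp
  simp only [affineBounds, center_eq, radius_eq, Matrix.mulVec_zero, Pi.zero_apply, sub_zero,
    add_zero]

theorem affineBounds_eq_posPart_negPart (W : Matrix m d R) (b : m → R) (I : (d → R) × (d → R)) :
    affineBounds W b I =
      ((W.map (·⁺)).mulVec I.1 - (W.map (·⁻)).mulVec I.2 + b,
        (W.map (·⁺)).mulVec I.2 - (W.map (·⁻)).mulVec I.1 + b) := by
  have lower_eq (w l u : R) : w * ((u + l) / 2) - |w| * ((u - l) / 2) = w⁺ * l - w⁻ * u := by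
    rw [← posPart_add_negPart w]
    nth_rw 1 [← posPart_sub_negPart w]
    ring
  have upper_eq (w l u : R) : w * ((u + l) / 2) + |w| * ((u - l) / 2) = w⁺ * u - w⁻ * l := by
    rw [← posPart_add_negPart w]
    nth_rw 1 [← posPart_sub_negPart w]
    ring
  ext i
  · simp only [affineBounds, Pi.add_apply, Pi.sub_apply]
    rw [add_sub_right_comm]
    simp only [Matrix.mulVec, dotProduct, Matrix.of_apply, Matrix.map_apply,
      ← Finset.sum_sub_distrib, lower_eq]
  · simp only [affineBounds, Pi.add_apply, Pi.sub_apply]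
    rw [add_right_comm]
    simp only [Matrix.mulVec, dotProduct, Matrix.of_apply, Matrix.map_apply,
      ← Finset.sum_sub_distrib, ← Finset.sum_add_distrib, upper_eq]

theorem IsEnclosedBy.affineBounds (W : Matrix m d R) (b : m → R) {I J : (d → R) × (d → R)}
    (hIJ : IsEnclosedBy I J) : IsEnclosedBy (affineBounds W b I) (affineBounds W b J) := by
  have posPart_mono {u v : d → R} (huv : u ≤ v) :
      (W.map (·⁺)).mulVec u ≤ (W.map (·⁺)).mulVec v :=
    mulVec_le_mulVec_of_nonneg_left (fun i j => posPart_nonneg (W i j)) huv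
  have negPart_mono {u v : d → R} (huv : u ≤ v) :
      (W.map (·⁻)).mulVec u ≤ (W.map (·⁻)).mulVec v :=
    mulVec_le_mulVec_of_nonneg_left (fun i j => negPart_nonneg (W i j)) huv
  simp only [affineBounds_eq_posPart_negPart]
  exact ⟨add_le_add_left (sub_le_sub (posPart_mono hIJ.1) (negPart_mono hIJ.2)) b,
    add_le_add_left (sub_le_sub (posPart_mono hIJ.2) (negPart_mono hIJ.1)) b⟩

end AffineBounds

section Propagation

variable {n : ℕ → ℕ} {W : ∀ k : ℕ, Matrix (Fin (n (k + 1))) (Fin (n k)) ℝ}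
  {b : ∀ k : ℕ, Fin (n (k + 1)) → ℝ} {h : ℝ → ℝ} {x x' : Fin (n 0) → ℝ} {ε ε' : ℝ}

theorem netPhi_succ (k : ℕ) : netPhi n W b h x (k + 1) = h ∘ netPre n W b h x k :=
  rfl

theorem ibpPre_eq_affineBounds (k : ℕ) :
    ibpPre n W b h x ε k = affineBounds (W k) (b k) (ibpPhi n W b h x ε k) :=
  rfl

theorem ibpPhi_succ (k : ℕ) :
    ibpPhi n W b h x ε (k + 1) = Prod.map (h ∘ ·) (h ∘ ·) (ibpPre n W b h x ε k) :=
  rfl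

theorem ibpPhi_radius_zero (k : ℕ) :
    ibpPhi n W b h x 0 k = (netPhi n W b h x k, netPhi n W b h x k) := by
  induction k with
  | zero => simp only [ibpPhi, netPhi, sub_zero, add_zero]
  | succ k ih =>
    rw [ibpPhi_succ, ibpPre_eq_affineBounds, ih, affineBounds_diag, Prod.map_apply, netPhi_succ,
      netPre]

theorem ibpPre_radius_zero (k : ℕ) :
    ibpPre n W b h x 0 k = (netPre n W b h x k, netPre n W b h x k) := by
  rw [ibpPre_eq_affineBounds, ibpPhi_radius_zero, affineBounds_diag, netPre]

theorem isEnclosedBy_ibpPhi (hh : Monotone h) (hball : ε' + dist x' x ≤ ε) (k : ℕ) :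
    IsEnclosedBy (ibpPhi n W b h x' ε' k) (ibpPhi n W b h x ε k) := by
  induction k with
  | zero =>
    have abs_sub_le (i : Fin (n 0)) : |x' i - x i| ≤ ε - ε' :=
      (dist_le_pi_dist x' x i).trans (le_sub_iff_add_le'.2 hball)
    constructor <;> intro i <;> simp only [ibpPhi] <;> linarith [abs_le.1 (abs_sub_le i)]
  | succ k ih =>
    have activation_mono : Monotone fun z : Fin (n (k + 1)) → ℝ => h ∘ z :=
      fun _ _ huv i => hh (huv i)
    exact (ih.affineBounds (W k) (b k)).map activation_mono

theorem isEnclosedBy_ibpPre (hh : Monotone h) (hball : ε' + dist x' x ≤ ε) (k : ℕ) :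
    IsEnclosedBy (ibpPre n W b h x' ε' k) (ibpPre n W b h x ε k) :=
  (isEnclosedBy_ibpPhi hh hball k).affineBounds (W k) (b k)

end Propagation

section Softmax

variable {C : ℕ} {y : Fin C}

theorem softmax_eq_inv_sum_exp_sub (y : Fin C) (z : Fin C → ℝ) :
    softmax y z = (∑ j, Real.exp (z j - z y))⁻¹ := by
  simp only [softmax, Real.exp_sub, ← Finset.sum_div, inv_div]

theorem softmax_mem_Icc (y : Fin C) (z : Fin C → ℝ) : softmax y z ∈ Set.Icc (0 : ℝ) 1 := by
  have exp_le_sum : Real.exp (z y) ≤ ∑ j, Real.exp (z j) :=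
    Finset.single_le_sum (f := fun j => Real.exp (z j)) (fun j _ => (Real.exp_pos _).le)
      (Finset.mem_univ y)
  have sum_nonneg : 0 ≤ ∑ j, Real.exp (z j) := (Real.exp_pos _).le.trans exp_le_sum
  exact ⟨div_nonneg (Real.exp_pos _).le sum_nonneg, div_le_one_of_le₀ exp_le_sum sum_nonneg⟩

theorem softmax_le_softmax {z w : Fin C → ℝ} (hy : z y ≤ w y) (hne : ∀ j, j ≠ y → w j ≤ z j) :
    softmax y z ≤ softmax y w := by
  have sum_pos : 0 < ∑ j, Real.exp (w j - w y) :=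
    Finset.sum_pos (fun j _ => Real.exp_pos _) ⟨y, Finset.mem_univ y⟩
  rw [softmax_eq_inv_sum_exp_sub, softmax_eq_inv_sum_exp_sub]
  gcongr ?_⁻¹
  refine Finset.sum_le_sum fun j _ => Real.exp_le_exp.2 ?_
  obtain rfl | hj := eq_or_ne j y
  · simp only [sub_self, le_refl]
  · exact sub_le_sub (hne j hj) hy

theorem cornerLB_diag (y : Fin C) (z : Fin C → ℝ) : cornerLB y z z = z :=
  funext fun _ => ite_self _

theorem IsEnclosedBy.softmax_cornerLB_le {I J : (Fin C → ℝ) × (Fin C → ℝ)}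
    (hIJ : IsEnclosedBy I J) :
    softmax y (cornerLB y J.1 J.2) ≤ softmax y (cornerLB y I.1 I.2) := by
  refine softmax_le_softmax ?_ fun j hj => ?_
  · simpa only [cornerLB, if_true] using hIJ.1 y
  · simpa only [cornerLB, if_neg hj] using hIJ.2 j

end Softmax

section MinSoftmax

variable {d C : ℕ} (f : (Fin d → ℝ) → Fin C → ℝ) (x : Fin d → ℝ) (y : Fin C)

theorem minSoftmax_eq_sInf_image (ε : ℝ) :
    minSoftmax f x y ε = sInf ((fun x' => softmax y (f x')) '' Metric.closedBall x ε) := by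
  simp only [minSoftmax, Set.image, Metric.mem_closedBall, dist_eq_norm', eq_comm]

theorem bddBelow_image_softmax (s : Set (Fin d → ℝ)) :
    BddBelow ((fun x' => softmax y (f x')) '' s) :=
  ⟨0, Set.forall_mem_image.2 fun _ _ => (softmax_mem_Icc y _).1⟩

variable {f x y}

theorem minSoftmax_le {x' : Fin d → ℝ} {ε : ℝ} (hx' : x' ∈ Metric.closedBall x ε) :
    minSoftmax f x y ε ≤ softmax y (f x') := by
  rw [minSoftmax_eq_sInf_image]
  exact csInf_le (bddBelow_image_softmax f y _) (Set.mem_image_of_mem _ hx')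

theorem le_minSoftmax {p ε : ℝ} (hε : 0 ≤ ε)
    (hp : ∀ x' ∈ Metric.closedBall x ε, p ≤ softmax y (f x')) : p ≤ minSoftmax f x y ε := by
  rw [minSoftmax_eq_sInf_image]
  exact le_csInf ((Metric.nonempty_closedBall.2 hε).image _) (Set.forall_mem_image.2 hp)

variable (f x y)

theorem antitoneOn_minSoftmax : AntitoneOn (minSoftmax f x y) (Set.Ici 0) := fun _ hε _ _ hεε' =>
  le_minSoftmax hε fun _ hx' => minSoftmax_le (Metric.closedBall_subset_closedBall hεε' hx')

theorem minSoftmax_mem_Icc {ε : ℝ} (hε : 0 ≤ ε) : minSoftmax f x y ε ∈ Set.Icc (0 : ℝ) 1 :=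
  ⟨le_minSoftmax hε fun _ _ => (softmax_mem_Icc y _).1,
    (minSoftmax_le (Metric.mem_closedBall_self hε)).trans (softmax_mem_Icc y _).2⟩

end MinSoftmax

theorem integrable_of_antitoneOn_of_mem_Icc {α : Type*} [TopologicalSpace α] [LinearOrder α]
    [OrderClosedTopology α] [MeasurableSpace α] [BorelSpace α] {μ : Measure α} [IsFiniteMeasure μ]
    {s : Set α} (hs : MeasurableSet s) (hμs : ∀ᵐ t ∂μ, t ∈ s) {g : α → ℝ} (hg : AntitoneOn g s)
    {p q : ℝ} (hgs : ∀ t ∈ s, g t ∈ Set.Icc p q) : Integrable g μ := by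
  have aemeasurable_g : AEMeasurable g μ := by
    simpa only [Measure.restrict_eq_self_of_ae_mem hμs] using
      aemeasurable_restrict_of_antitoneOn (μ := μ) hs hg
  exact .of_mem_Icc p q aemeasurable_g (hμs.mono hgs)

section IbpLikelihood

variable {n : ℕ → ℕ} (W : ∀ k : ℕ, Matrix (Fin (n (k + 1))) (Fin (n k)) ℝ)
  (b : ∀ k : ℕ, Fin (n (k + 1)) → ℝ) {h : ℝ → ℝ} (x : Fin (n 0) → ℝ) {k : ℕ}
  (y : Fin (n (k + 1)))

theorem antitone_softmax_cornerLB_ibpPre (hh : Monotone h) :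
    Antitone fun ε => softmax y (cornerLB y (ibpPre n W b h x ε k).1 (ibpPre n W b h x ε k).2) :=
  fun _ _ hεε' =>
    (isEnclosedBy_ibpPre hh (by simpa only [dist_self, add_zero] using hεε') k).softmax_cornerLB_le

theorem softmax_cornerLB_ibpPre_le_minSoftmax (hh : Monotone h) {ε : ℝ} (hε : 0 ≤ ε) :
    softmax y (cornerLB y (ibpPre n W b h x ε k).1 (ibpPre n W b h x ε k).2) ≤
      minSoftmax (fun x' => netPre n W b h x' k) x y ε := by
  refine le_minSoftmax hε fun x' hx' => ?_
  have point_enclosed : IsEnclosedBy (ibpPre n W b h x' 0 k) (ibpPre n W b h x ε k) :=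
    isEnclosedBy_ibpPre hh (by simpa only [zero_add] using Metric.mem_closedBall.1 hx') k
  simpa only [ibpPre_radius_zero, cornerLB_diag] using point_enclosed.softmax_cornerLB_le (y := y)

theorem integral_softmax_cornerLB_ibpPre_le (hh : Monotone h) {μ : Measure ℝ}
    [IsFiniteMeasure μ] (hμ : ∀ᵐ ε ∂μ, 0 ≤ ε) :
    ∫ ε, softmax y (cornerLB y (ibpPre n W b h x ε k).1 (ibpPre n W b h x ε k).2) ∂μ ≤
      ∫ ε, minSoftmax (fun x' => netPre n W b h x' k) x y ε ∂μ :=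
  integral_mono_ae
    (integrable_of_antitoneOn_of_mem_Icc measurableSet_Ici hμ
      ((antitone_softmax_cornerLB_ibpPre W b x y hh).antitoneOn _) fun _ _ => softmax_mem_Icc y _)
    (integrable_of_antitoneOn_of_mem_Icc measurableSet_Ici hμ
      (antitoneOn_minSoftmax _ x y) fun _ => minSoftmax_mem_Icc _ x y)
    (hμ.mono fun _ => softmax_cornerLB_ibpPre_le_minSoftmax W b x y hh)

end IbpLikelihood

/-- Proposition 1: For a `K`-layer network (`K ≥ 1`) with monotone
nondecreasing activation, input `x`, class `y`, and a probability measure `p_ε` on `ℝ`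
concentrated on `[0,∞)`, both `ε ↦ σ_y(f_min^{w,ε}(x))` and `ε ↦ σ_y(f_LB^{w,ε}(x))`
are antitone `[0,1]`-valued functions on `[0,∞)`, and the robust likelihood
`p(y|x,w) = ∫ σ_y(f_min^{w,ε}(x)) dp_ε` is lower bounded by its IBP approximation
`p_IBP(y|x,w) = ∫ σ_y(f_LB^{w,ε}(x)) dp_ε`. -/
theorem robust_likelihood_ibp_lower_bound (n : ℕ → ℕ)
    (W : ∀ k : ℕ, Matrix (Fin (n (k + 1))) (Fin (n k)) ℝ)
    (b : ∀ k : ℕ, Fin (n (k + 1)) → ℝ) (h : ℝ → ℝ) (hmono : Monotone h)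
    (K : ℕ) (hK : 1 ≤ K) (x : Fin (n 0) → ℝ) (y : Fin (n (K - 1 + 1)))
    (pε : Measure ℝ) [IsProbabilityMeasure pε] (hpε : pε (Set.Iio 0) = 0) :
    AntitoneOn (fun ε => minSoftmax (fun x' => netPre n W b h x' (K - 1)) x y ε)
      (Set.Ici (0 : ℝ)) ∧
    (∀ ε : ℝ, 0 ≤ ε →
      minSoftmax (fun x' => netPre n W b h x' (K - 1)) x y ε ∈ Set.Icc (0 : ℝ) 1) ∧
    AntitoneOn (fun ε =>
        softmax y (cornerLB y (ibpPre n W b h x ε (K - 1)).1 (ibpPre n W b h x ε (K - 1)).2))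
      (Set.Ici (0 : ℝ)) ∧
    (∀ ε : ℝ, 0 ≤ ε →
      softmax y (cornerLB y (ibpPre n W b h x ε (K - 1)).1 (ibpPre n W b h x ε (K - 1)).2)
        ∈ Set.Icc (0 : ℝ) 1) ∧
    (∫ ε, softmax y (cornerLB y (ibpPre n W b h x ε (K - 1)).1
          (ibpPre n W b h x ε (K - 1)).2) ∂pε) ≤
      ∫ ε, minSoftmax (fun x' => netPre n W b h x' (K - 1)) x y ε ∂pε := by
  have radius_nonneg : ∀ᵐ ε ∂pε, 0 ≤ ε :=
    (measure_eq_zero_iff_ae_notMem.1 hpε).mono fun _ => Set.notMem_Iio.1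
  exact ⟨antitoneOn_minSoftmax _ x y,
    fun _ => minSoftmax_mem_Icc _ x y,
    (antitone_softmax_cornerLB_ibpPre W b x y hmono).antitoneOn _,
    fun _ _ => softmax_mem_Icc y _,
    integral_softmax_cornerLB_ibpPre_le W b x y hmono radius_nonneg⟩
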